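/- For all real numbers u ∈ (0,1], X ∈ [0,2] and Y > 2u², one has −Y·(6u² + 2X²) + 8Xu³ + 8X²u² − 8XYu − 16u²(1 − u²) < 0. -/

import Mathlib

/-- Computational core of Lemma `lemmaforARF1`: for `u ∈ (0,1]`, `X ∈ [0,2]` and
`Y > 2u²`, the bound on the evolution of `ψ = c_s − 2u²` at a positive maximum is
negative. -/
theorem stmt_11 :
    ∀ u X Y : ℝ, u ∈ Set.Ioc (0 : ℝ) 1 → X ∈ Set.Icc (0 : ℝ) 2 → Y > 2 * u ^ 2 →
      -Y * (6 * u ^ 2 + 2 * X ^ 2) + 8 * X * u ^ 3 + 8 * X ^ 2 * u ^ 2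
        - 8 * X * Y * u - 16 * u ^ 2 * (1 - u ^ 2) < 0 := by
  rintro u X Y ⟨hu0, hu1⟩ ⟨hX0, hX2⟩ hY
  have hcoeff : 0 < (Y - 2 * u ^ 2) * (6 * u ^ 2 + 2 * X ^ 2 + 8 * X * u) :=
    mul_pos (sub_pos.mpr hY) (by positivity)
  have hsq : (X - u) ^ 2 ≤ 2 ^ 2 := sq_le_sq' (by linarith) (by linarith)
  have hbdry : 0 ≤ 4 * u ^ 2 * (2 ^ 2 - (X - u) ^ 2) :=
    mul_nonneg (by positivity) (sub_nonneg.mpr hsq)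
  linarith
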